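/- Let Λ = KQ/⟨all paths of length L+1⟩ be a truncated path algebra over an algebraically closed field, B the transpose of the adjacency matrix of Q, S = (S_0,…,S_L) a realizable semisimple sequence with the convention S_{L+1} = 0, and let S* = (S*_0,…,S*_L) be the generic socle layering of the modules in Rep S. Then the generic socle S*_0 is determined by its dimension vector: dim S*_0 = sup{ Σ_{l=L−j}^{L} ( dim S_l − (dim S_{l+1})·B ) : 0 ≤ j ≤ L }, the supremum being taken componentwise in Z^n. -/

import Mathlib

open Finset

/-! # Varieties of representations of a quiver with relations: basic setup -/

/-- The Zariski topology on the affine space `ι → K`: it is generated by the basic open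
sets `D(p) = {x | p(x) ≠ 0}`, where `p` ranges over multivariate polynomials. -/
def zariskiTopology (ι K : Type) [CommSemiring K] : TopologicalSpace (ι → K) :=
  TopologicalSpace.generateFrom
    {U | ∃ p : MvPolynomial ι K, U = {x | MvPolynomial.eval x p ≠ 0}}

/-- A finite quiver `Q`: vertices `Fin n`, arrows `Fin numArrows` with source and
target maps. -/
structure QuiverData where
  n : ℕ
  numArrows : ℕ
  src : Fin numArrows → Fin n
  tgt : Fin numArrows → Fin n

namespace QuiverData

variable (Q : QuiverData) (d : Fin Q.n → ℕ) (K : Type) [Field K]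

/-- Index of the coordinates of the affine space of `d`-dimensional representations:
for each arrow `a` a matrix entry index in `Fin (d (tgt a)) × Fin (d (src a))`. -/
abbrev Coords := Σ a : Fin Q.numArrows, Fin (d (Q.tgt a)) × Fin (d (Q.src a))

/-- The affine space of `d`-dimensional representations of `Q`:
a point `x` assigns to each arrow `a` a `d (tgt a) × d (src a)` matrix over `K`. -/
abbrev RepSpace := Coords Q d → K

/-- `RepSpace` carries the Zariski topology. -/
noncomputable instance instRepTop : TopologicalSpace (RepSpace Q d K) :=
  zariskiTopology (Coords Q d) K

/-- The underlying `K`-vector space `⊕ᵢ K^{dᵢ}` of any `d`-dimensional representation. -/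
abbrev Carrier := (Σ i : Fin Q.n, Fin (d i)) → K

/-- The projection onto the component of the `i`-th vertex (action of the primitive
idempotent `eᵢ`). -/
def proj (i : Fin Q.n) : Carrier Q d K →ₗ[K] Carrier Q d K where
  toFun m := fun jv => if jv.1 = i then m jv else 0
  map_add' u v := by
    funext jv; by_cases h : jv.1 = i <;> simp [h]
  map_smul' c u := by
    funext jv; by_cases h : jv.1 = i <;> simp [h]

/-- The action of the arrow `a` on the carrier space of the representation `x`. -/
noncomputable def arrowMap (x : RepSpace Q d K) (a : Fin Q.numArrows) :
    Carrier Q d K →ₗ[K] Carrier Q d K where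
  toFun m := fun jv =>
    if h : jv.1 = Q.tgt a then
      ∑ w : Fin (d (Q.src a)), x ⟨a, (Fin.cast (congrArg d h) jv.2, w)⟩ * m ⟨Q.src a, w⟩
    else 0
  map_add' u v := by
    funext jv
    by_cases h : jv.1 = Q.tgt a <;> simp [h, mul_add, Finset.sum_add_distrib]
  map_smul' c u := by
    funext jv
    by_cases h : jv.1 = Q.tgt a <;>
      simp [h, Finset.mul_sum, mul_comm, mul_left_comm, mul_assoc]

/-- The action of a word `w = [a_k, …, a_1]` of arrows on the representation `x`
(the arrow `a_1` acts first; non-composable words act as `0`). -/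
noncomputable def wordMap (x : RepSpace Q d K) (w : List (Fin Q.numArrows)) :
    Module.End K (Carrier Q d K) :=
  (w.map fun a => (arrowMap Q d K x a : Module.End K (Carrier Q d K))).prod

/-- The submodule `J^l · M_x` of the module `M_x`: the sum of the images of all words of
arrows of length `l` (for an admissible ideal, the radical acts through the arrows). -/
noncomputable def radPow (x : RepSpace Q d K) (l : ℕ) : Submodule K (Carrier Q d K) :=
  ⨆ w : {w : List (Fin Q.numArrows) // w.length = l},
    LinearMap.range (wordMap Q d K x w.1)

/-- The socle series of `M_x`: `socPow x l = soc_l(M_x)`. -/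
noncomputable def socPow (x : RepSpace Q d K) : ℕ → Submodule K (Carrier Q d K)
  | 0 => ⨅ a, LinearMap.ker (arrowMap Q d K x a)
  | (l+1) => ⨅ a, (socPow x l).comap (arrowMap Q d K x a)

/-- The dimension, at the vertex `i`, of a (vertex-graded) subspace `N`. -/
noncomputable def vdim (N : Submodule K (Carrier Q d K)) (i : Fin Q.n) : ℕ :=
  Module.finrank K (N.map (proj Q d K i))

/-- The radical layering `S(M_x) = (M/JM, JM/J²M, …, J^L M/J^{L+1} M)` of the module `M_x`,
recorded through the dimension vectors of its semisimple layers. -/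
noncomputable def radLayering (L : ℕ) (x : RepSpace Q d K) :
    Fin (L+1) → Fin Q.n → ℕ :=
  fun l i => vdim Q d K (radPow Q d K x l) i - vdim Q d K (radPow Q d K x (l+1)) i

/-- The socle layering `S*(M_x) = (soc₀M, soc₁M/soc₀M, …)` of the module `M_x`, recorded
through the dimension vectors of its semisimple layers. -/
noncomputable def socLayering (L : ℕ) (x : RepSpace Q d K) :
    Fin (L+1) → Fin Q.n → ℕ :=
  fun l i => vdim Q d K (socPow Q d K x l) i -
    (if (l : ℕ) = 0 then 0 else vdim Q d K (socPow Q d K x ((l : ℕ) - 1)) i)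

end QuiverData

/-- The dominance order on semisimple sequences (recorded as sequences of dimension
vectors): `dominates S S'` means `S ≤ S'`, i.e. `⊕_{j≤l} S_j ⊆ ⊕_{j≤l} S'_j` for all `l`. -/
def dominates {n L : ℕ} (S S' : Fin (L+1) → Fin n → ℕ) : Prop :=
  ∀ (l : Fin (L+1)) (i : Fin n),
    ∑ j ∈ Finset.univ.filter (fun j => j ≤ l), S j i ≤
      ∑ j ∈ Finset.univ.filter (fun j => j ≤ l), S' j i

/-- A semisimple sequence has dimension vector `d` if its layers' dimension vectors sum
to `d`. -/
def hasDimVec {n L : ℕ} (S : Fin (L+1) → Fin n → ℕ) (d : Fin n → ℕ) : Prop :=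
  ∀ i, ∑ l, S l i = d i

namespace QuiverData

variable (Q : QuiverData) (d : Fin Q.n → ℕ) (K : Type) [Field K]

/-- Evaluation of a formal noncommutative polynomial in the vertices (`Sum.inl`) and
arrows (`Sum.inr`) of `Q` on the representation `x`; an element of the path algebra `KQ`
is represented by such a polynomial. -/
noncomputable def evalRel (x : RepSpace Q d K) :
    FreeAlgebra K (Fin Q.n ⊕ Fin Q.numArrows) →ₐ[K] Module.End K (Carrier Q d K) :=
  FreeAlgebra.lift K
    (Sum.elim (fun i => (proj Q d K i : Module.End K (Carrier Q d K)))
      (fun a => (arrowMap Q d K x a : Module.End K (Carrier Q d K))))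

/-- The affine variety `Rep_d(Λ)` for `Λ = KQ/I`, where the ideal `I` is generated by the
set `R` of relations: the set of points of `RepSpace` annihilating every relation. -/
def RepVar (R : Set (FreeAlgebra K (Fin Q.n ⊕ Fin Q.numArrows))) :
    Set (RepSpace Q d K) :=
  {x | ∀ r ∈ R, evalRel Q d K x r = 0}

/-- The affine variety `Rep_d(Λ)` for the truncated path algebra
`Λ = KQ/⟨all paths of length L+1⟩`. -/
def TruncRepVar (L : ℕ) : Set (RepSpace Q d K) :=
  {x | ∀ w : List (Fin Q.numArrows), w.length = L + 1 → wordMap Q d K x w = 0}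

/-- A submodule of `M_x`, i.e. a subspace stable under the arrows and the vertex
idempotents. -/
def Stable (x : RepSpace Q d K) (N : Submodule K (Carrier Q d K)) : Prop :=
  (∀ a, N.map (arrowMap Q d K x a) ≤ N) ∧ ∀ i, N.map (proj Q d K i) ≤ N

/-- A submodule `N` of `M_x` is indecomposable (as a module). -/
def IndecompSub (x : RepSpace Q d K) (N : Submodule K (Carrier Q d K)) : Prop :=
  N ≠ ⊥ ∧ ∀ N₁ N₂ : Submodule K (Carrier Q d K),
    Stable Q d K x N₁ → Stable Q d K x N₂ → N₁ ≤ N → N₂ ≤ N →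
    N₁ ⊔ N₂ = N → N₁ ⊓ N₂ = ⊥ → N₁ = ⊥ ∨ N₂ = ⊥

/-- The module `M_x` is indecomposable. -/
def IndecompRep (x : RepSpace Q d K) : Prop :=
  IndecompSub Q d K x ⊤

/-- The module `M_x` is uniserial: its submodules form a chain. -/
def UniserialRep (x : RepSpace Q d K) : Prop :=
  ∀ N₁ N₂ : Submodule K (Carrier Q d K),
    Stable Q d K x N₁ → Stable Q d K x N₂ → N₁ ≤ N₂ ∨ N₂ ≤ N₁

/-- `M_x` decomposes as a direct sum of `s` indecomposable submodules whose dimension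
vectors are `D 0, …, D (s-1)`. -/
def DecompWith (x : RepSpace Q d K) (s : ℕ) (D : Fin s → Fin Q.n → ℕ) : Prop :=
  ∃ N : Fin s → Submodule K (Carrier Q d K),
    (∀ r, Stable Q d K x (N r)) ∧
    (∀ r, Disjoint (N r) (⨆ t, ⨆ (_ : t ≠ r), N t)) ∧
    (⨆ r, N r) = ⊤ ∧
    (∀ r, IndecompSub Q d K x (N r)) ∧
    ∀ r i, vdim Q d K (N r) i = D r i

/-- A homomorphism of representations `M_x → M_y` (for possibly different dimension
vectors): a linear map commuting with the arrow actions and the vertex projections. -/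
def RepHom (dx dy : Fin Q.n → ℕ) (x : RepSpace Q dx K) (y : RepSpace Q dy K)
    (φ : Carrier Q dx K →ₗ[K] Carrier Q dy K) : Prop :=
  (∀ a, φ ∘ₗ arrowMap Q dx K x a = arrowMap Q dy K y a ∘ₗ φ) ∧
  ∀ i, φ ∘ₗ proj Q dx K i = proj Q dy K i ∘ₗ φ

/-- The submodule `N` of `M_x` is isomorphic, as a representation, to `M_y`. -/
def SubrepIso (dy : Fin Q.n → ℕ) (x : RepSpace Q d K)
    (N : Submodule K (Carrier Q d K)) (y : RepSpace Q dy K) : Prop :=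
  ∃ φ : Carrier Q d K →ₗ[K] Carrier Q dy K,
    N ⊓ LinearMap.ker φ = ⊥ ∧ N.map φ = ⊤ ∧
    (∀ a, ∀ m ∈ N, φ (arrowMap Q d K x a m) = arrowMap Q dy K y a (φ m)) ∧
    (∀ i, ∀ m ∈ N, φ (proj Q d K i m) = proj Q dy K i (φ m))

/-- The representations `M_x` and `M_y` are isomorphic; the isomorphism classes are
exactly the orbits of the `GL(d)`-action. -/
def IsoRep (x y : RepSpace Q d K) : Prop :=
  ∃ φ : Carrier Q d K ≃ₗ[K] Carrier Q d K,
    (∀ a m, φ (arrowMap Q d K x a m) = arrowMap Q d K y a (φ m)) ∧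
    ∀ i m, φ (proj Q d K i m) = proj Q d K i (φ m)

/-- The `GL(d)`-orbit of the point `x`, i.e. the set of points encoding modules
isomorphic to `M_x`. -/
def orbitSet (x : RepSpace Q d K) : Set (RepSpace Q d K) :=
  {y | IsoRep Q d K x y}

/-- Given a family `P` of varieties `Rep_dv(Λ)` (one for every dimension vector `dv`),
`Ext¹_Λ(M_x, M_y) = 0`: every extension `0 → M_y → E → M_x → 0` of `Λ`-modules splits. -/
def Ext1Zero (P : ∀ dv : Fin Q.n → ℕ, Set (RepSpace Q dv K))
    (dx dy : Fin Q.n → ℕ) (x : RepSpace Q dx K) (y : RepSpace Q dy K) : Prop :=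
  ∀ z ∈ P (fun i => dx i + dy i),
    ∀ (ι : Carrier Q dy K →ₗ[K] Carrier Q (fun i => dx i + dy i) K)
      (π : Carrier Q (fun i => dx i + dy i) K →ₗ[K] Carrier Q dx K),
      RepHom Q K dy (fun i => dx i + dy i) y z ι →
      RepHom Q K (fun i => dx i + dy i) dx z x π →
      Function.Injective ι → Function.Surjective π →
      LinearMap.ker π = LinearMap.range ι →
      ∃ σ : Carrier Q dx K →ₗ[K] Carrier Q (fun i => dx i + dy i) K,
        RepHom Q K dx (fun i => dx i + dy i) x z σ ∧ π ∘ₗ σ = LinearMap.id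

/-- The direct sum `C₁ ⊕ ⋯ ⊕ C_s` of subvarieties `C_r ⊆ Rep_{D r}(Λ)`: the set of
points `x ∈ Rep_d(Λ)` whose module decomposes as `M_x ≅ ⊕_r M^{(r)}` with `M^{(r)}`
encoded by a point of `C_r`. -/
def DirectSumSet (s : ℕ) (D : Fin s → Fin Q.n → ℕ)
    (Cs : ∀ r : Fin s, Set (RepSpace Q (D r) K)) : Set (RepSpace Q d K) :=
  {x | ∃ N : Fin s → Submodule K (Carrier Q d K),
    (∀ r, Stable Q d K x (N r)) ∧
    (∀ r, Disjoint (N r) (⨆ t, ⨆ (_ : t ≠ r), N t)) ∧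
    (⨆ r, N r) = ⊤ ∧
    ∀ r, ∃ y ∈ Cs r, SubrepIso Q d K (D r) x (N r) y}

/-- The endomorphism space `End_Λ(M_x)` of the module `M_x`. -/
def endSpace (x : RepSpace Q d K) :
    Submodule K (Carrier Q d K →ₗ[K] Carrier Q d K) where
  carrier := {φ | RepHom Q K d d x x φ}
  add_mem' := by
    intro φ ψ hφ hψ
    exact ⟨fun a => by rw [LinearMap.add_comp, LinearMap.comp_add, hφ.1 a, hψ.1 a],
      fun i => by rw [LinearMap.add_comp, LinearMap.comp_add, hφ.2 i, hψ.2 i]⟩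
  zero_mem' := by
    exact ⟨fun a => by simp, fun i => by simp⟩
  smul_mem' := by
    intro c φ hφ
    exact ⟨fun a => by rw [LinearMap.smul_comp, LinearMap.comp_smul, hφ.1 a],
      fun i => by rw [LinearMap.smul_comp, LinearMap.comp_smul, hφ.2 i]⟩

/-- A word of arrows is a (composable) path when read in function-composition order. -/
def IsPathWord (w : List (Fin Q.numArrows)) : Prop :=
  List.Chain' (fun a b => Q.src a = Q.tgt b) w

/-- The quiver `Q` has no oriented cycles. -/
def Acyclic : Prop :=
  ∀ (a : Fin Q.numArrows) (w : List (Fin Q.numArrows)),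
    IsPathWord Q (a :: w) →
      Q.tgt a ≠ Q.src ((a :: w).getLast (List.cons_ne_nil a w))

/-- A filtration `M_x = F 0 ⊇ F 1 ⊇ ⋯ ⊇ F (L+1) = 0` by submodules which is governed by
the semisimple sequence `S`: each layer `F l / F (l+1)` is semisimple, isomorphic to `S l`. -/
def Governed (L : ℕ) (x : RepSpace Q d K) (S : Fin (L+1) → Fin Q.n → ℕ)
    (F : Fin (L+2) → Submodule K (Carrier Q d K)) : Prop :=
  F 0 = ⊤ ∧ F (Fin.last (L+1)) = ⊥ ∧
  (∀ l : Fin (L+1), F l.succ ≤ F l.castSucc) ∧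
  (∀ (l : Fin (L+2)) (i : Fin Q.n), (F l).map (proj Q d K i) ≤ F l) ∧
  (∀ (l : Fin (L+1)) (a : Fin Q.numArrows),
      (F l.castSucc).map (arrowMap Q d K x a) ≤ F l.succ) ∧
  ∀ (l : Fin (L+1)) (i : Fin Q.n),
      vdim Q d K (F l.castSucc) i = S l i + vdim Q d K (F l.succ) i

/-- `Filt S`: the set of points whose module has a filtration governed by `S`. -/
def FiltSet (L : ℕ) (S : Fin (L+1) → Fin Q.n → ℕ) : Set (RepSpace Q d K) :=
  {x | ∃ F, Governed Q d K L x S F}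

/-- `Γ(M_x)`: the number of semisimple sequences which are realizable (i.e. occur as the
radical layering of a module in the variety `P`) and which govern some filtration of `M_x`. -/
noncomputable def gammaCount (L : ℕ) (P : Set (RepSpace Q d K))
    (x : RepSpace Q d K) : ℕ :=
  Set.ncard {S : Fin (L+1) → Fin Q.n → ℕ |
    (∃ y ∈ P, radLayering Q d K L y = S) ∧ ∃ F, Governed Q d K L x S F}

/-- `Sstar` is the generic (= minimal, attained) socle layering of the modules in `W`. -/
def GenSoc (L : ℕ) (W : Set (RepSpace Q d K))
    (Sstar : Fin (L+1) → Fin Q.n → ℕ) : Prop :=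
  (∀ x ∈ W, dominates Sstar (socLayering Q d K L x)) ∧
  ∃ x ∈ W, socLayering Q d K L x = Sstar

end QuiverData

namespace QuiverData

variable (Q : QuiverData)

/-- The `i`-th entry of the row vector `e·A` (over `ℤ`), where `A` is the adjacency
matrix of `Q`: the sum of `e (src a)` over all arrows `a` ending at `i`. -/
def inflowZ (e : Fin Q.n → ℤ) (i : Fin Q.n) : ℤ :=
  ∑ a ∈ Finset.univ.filter (fun a => Q.tgt a = i), e (Q.src a)

/-- The `i`-th entry of the row vector `e·B` (over `ℤ`), where `B` is the transpose of
the adjacency matrix of `Q`. -/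
def outflowZ (e : Fin Q.n → ℤ) (i : Fin Q.n) : ℤ :=
  ∑ a ∈ Finset.univ.filter (fun a => Q.src a = i), e (Q.tgt a)

/-- Partial sums `t⁽⁰⁾ + ⋯ + t⁽ˡ⁾` of the recursion
`t⁽⁰⁾ = sup{0, d − d·A}`, `t⁽ˡ⁺¹⁾ = sup{0, (d − ∑_{k≤l} t⁽ᵏ⁾) − (d − ∑_{k≤l} t⁽ᵏ⁾)·A}`
(computed componentwise). -/
def cumLayer (dz : Fin Q.n → ℤ) : ℕ → Fin Q.n → ℤ
  | 0 => fun i => max 0 (dz i - inflowZ Q dz i)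
  | (l+1) => fun i =>
      cumLayer dz l i +
        max 0 ((dz i - cumLayer dz l i) -
          inflowZ Q (fun j => dz j - cumLayer dz l j) i)

/-- The positive part `∑ᵢ eᵢ fᵢ` of the Euler form of `Q`. -/
def eulerHomPart (e f : Fin Q.n → ℕ) : ℕ := ∑ i, e i * f i

/-- The negative part `∑_{α} e_{src α} f_{tgt α}` of the Euler form of `Q`, so that
`⟨e, f⟩ = eulerHomPart e f − eulerExtPart e f`. -/
def eulerExtPart (e f : Fin Q.n → ℕ) : ℕ :=
  ∑ a, e (Q.src a) * f (Q.tgt a)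

end QuiverData

/-- The quiver with a single vertex and `r` loops. -/
def QuiverData.loopQuiver (r : ℕ) : QuiverData :=
  ⟨1, r, fun _ => 0, fun _ => 0⟩

namespace QuiverData

variable (Q : QuiverData) (d : Fin Q.n → ℕ) (K : Type) [Field K]

/-- The variety `Rep_d(Λ)` for `Λ = KQ/⟨Rels⟩`, regarded as a topological space with the
(subspace) Zariski topology. -/
abbrev GenV (Rels : Set (FreeAlgebra K (Fin Q.n ⊕ Fin Q.numArrows))) :=
  {y : RepSpace Q d K // y ∈ RepVar Q d K Rels}

/-- The variety `Rep_d(Λ)` for the truncated path algebra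
`Λ = KQ/⟨paths of length L+1⟩`, regarded as a topological space. -/
abbrev TruncV (L : ℕ) := {y : RepSpace Q d K // y ∈ TruncRepVar Q d K L}

end QuiverData

/-- The semisimple sequence `S`, extended by `0` beyond index `L` and recorded over `ℤ`
(CONTEXT for Statement 11: the convention `S_{L+1} = 0`). -/
def seqZ (Q : QuiverData) (L : ℕ) (S : Fin (L+1) → Fin Q.n → ℕ) (l : ℕ) :
    Fin Q.n → ℤ :=
  fun i => if h : l < L + 1 then (S ⟨l, h⟩ i : ℤ) else 0

/-! Write `e_i` for the idempotent at the vertex `i`. The arrows starting at `i` map `e_i J^m M`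
into `⊕_a e_{tgt a} J^{m+1} M`, with kernel in the socle, so every `M` in `Rep S` satisfies
`dim e_i J^m M - ∑_a dim e_{tgt a} J^{m+1} M ≤ dim e_i soc M`. The left-hand sides are the sums
over which the supremum is taken.

For the converse, extending a linear map greedily from `e_i J^L M` up to `e_i M` gives a map from
`e_i M` to `⊕_a e_{tgt a} J M` that respects the radical filtrations and whose kernel has dimension
at most one of these differences. Let `z` be the representation realizing it. If `x` encodes `M`,
then for all but finitely many `t` the point `x + t z` has the same radical filtration as `x`, and
its socle at `i` is no larger than that of `z`, because ranks can only go up generically along a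
line. -/

section LinearPencils

open Filter Module

variable {K E F : Type*} [Field K] [AddCommGroup E] [Module K E] [AddCommGroup F] [Module K F]

lemma eventually_cofinite_isUnit_one_add_smul [FiniteDimensional K E] (C : End K E) :
    ∀ᶠ t : K in cofinite, IsUnit (1 + t • C) := by
  have hspec : ∀ᶠ t : K in cofinite, t⁻¹ ∉ spectrum K (-C) :=
    (inv_injective.tendsto_cofinite).eventually (End.finite_spectrum (-C)).compl_mem_cofinite
  filter_upwards [hspec, eventually_cofinite_ne 0] with t ht ht0
  rw [spectrum.notMem_iff, Algebra.algebraMap_eq_smul_one, sub_neg_eq_add] at ht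
  simpa [smul_add, smul_smul, ht0] using ht.smul (Units.mk0 t ht0)

lemma eventually_cofinite_finrank_range_left_le [FiniteDimensional K E] (A B : E →ₗ[K] F) :
    ∀ᶠ t : K in cofinite,
      finrank K (LinearMap.range A) ≤ finrank K (LinearMap.range (A + t • B)) := by
  -- Compressing to `range A` turns the pencil into `1 + t • C` for an endomorphism `C`.
  obtain ⟨s, hs⟩ := A.rangeRestrict.exists_rightInverse_of_surjective A.range_rangeRestrict
  obtain ⟨p, hp⟩ := (LinearMap.range A).subtype.exists_leftInverse_of_injective
    (Submodule.ker_subtype _)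
  filter_upwards [eventually_cofinite_isUnit_one_add_smul (p ∘ₗ B ∘ₗ s)] with t ht
  have hfactor : p ∘ₗ (A + t • B) ∘ₗ s = 1 + t • (p ∘ₗ B ∘ₗ s) := by
    have hA : p ∘ₗ A ∘ₗ s = 1 := by
      ext v
      have hsv : A (s v) = v := congrArg Subtype.val (LinearMap.congr_fun hs v)
      exact congrArg Subtype.val ((congrArg p hsv).trans (LinearMap.congr_fun hp v))
    rw [LinearMap.add_comp, LinearMap.comp_add, hA, LinearMap.smul_comp, LinearMap.comp_smul]
  have hinj : Function.Injective ((A + t • B) ∘ₗ s) := by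
    refine Function.Injective.of_comp (f := p) ?_
    rw [← LinearMap.coe_comp, hfactor]
    exact ((End.isUnit_iff _).mp ht).injective
  refine (LinearMap.finrank_range_of_inj hinj).symm.trans_le ?_
  exact Submodule.finrank_mono (LinearMap.range_comp_le_range _ _)

lemma eventually_cofinite_finrank_range_right_le [FiniteDimensional K E] (A B : E →ₗ[K] F) :
    ∀ᶠ t : K in cofinite,
      finrank K (LinearMap.range B) ≤ finrank K (LinearMap.range (A + t • B)) := by
  filter_upwards [inv_injective.tendsto_cofinite.eventually
    (eventually_cofinite_finrank_range_left_le B A), eventually_cofinite_ne 0] with t ht ht0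
  have hscale : A + t • B = t • (B + t⁻¹ • A) := by
    rw [smul_add, smul_inv_smul₀ ht0, add_comm]
  rwa [hscale, LinearMap.range_smul _ _ ht0]

lemma eventually_cofinite_iSup_map_add_smul_eq {ι : Type*} [Finite ι] [FiniteDimensional K E]
    {A B : ι → E →ₗ[K] F} {N : Submodule K E} {N' : Submodule K F}
    (hA : ⨆ a, N.map (A a) = N') (hB : ∀ a, N.map (B a) ≤ N') :
    ∀ᶠ t : K in cofinite, ⨆ a, N.map (A a + t • B a) = N' := by
  classical
  have := Fintype.ofFinite ι
  let total (C : ι → E →ₗ[K] F) : (ι → N) →ₗ[K] F :=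
    LinearMap.lsum K (fun _ => N) K fun a => (C a).domRestrict N
  have range_total (C : ι → E →ₗ[K] F) : LinearMap.range (total C) = ⨆ a, N.map (C a) := by
    rw [LinearMap.range_eq_map, ← LinearMap.iSup_range_single, Submodule.map_iSup]
    refine iSup_congr fun a => ?_
    rw [← LinearMap.range_comp, ← LinearMap.range_domRestrict]
    congr 1
    ext v
    exact LinearMap.lsum_piSingle ..
  have total_add_smul (t : K) : total (fun a => A a + t • B a) = total A + t • total B := by
    ext
    simp [total, Finset.sum_add_distrib, Finset.smul_sum]
  filter_upwards [eventually_cofinite_finrank_range_left_le (total A) (total B)] with t ht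
  rw [← total_add_smul, range_total, range_total, hA] at ht
  have : FiniteDimensional K N' := hA ▸ Submodule.finite_iSup _
  refine Submodule.eq_of_le_of_finrank_le (iSup_le fun a => ?_) ht
  rintro _ ⟨v, hv, rfl⟩
  exact N'.add_mem (hA.le (Submodule.mem_iSup_of_mem a ⟨v, hv, rfl⟩))
    (N'.smul_mem t (hB a ⟨v, hv, rfl⟩))

end LinearPencils

section FilteredMaps

open Module

variable {K V T : Type*} [Field K] [AddCommGroup V] [Module K V] [FiniteDimensional K V]
  [AddCommGroup T] [Module K T]

lemma finrank_map_add_finrank_ker_inf (f : V →ₗ[K] T) (U : Submodule K V) :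
    finrank K (U.map f) + finrank K (LinearMap.ker f ⊓ U : Submodule K V) = finrank K U := by
  rw [← LinearMap.finrank_range_add_finrank_ker (f.domRestrict U), LinearMap.range_domRestrict,
    LinearMap.ker_domRestrict, inf_comm, ← Submodule.map_comap_subtype,
    Submodule.finrank_map_subtype_eq]

variable [FiniteDimensional K T]

lemma exists_injective_or_surjective :
    ∃ f : V →ₗ[K] T, Function.Injective f ∨ Function.Surjective f := by
  rcases le_total (finrank K V) (finrank K T) with h | h
  · obtain ⟨f, hf⟩ := finrank_le_iff_exists_linearMap.mp h
    exact ⟨f, .inl hf⟩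
  · obtain ⟨g, hg⟩ := finrank_le_iff_exists_linearMap.mp h
    obtain ⟨f, hf⟩ := g.exists_leftInverse_of_injective (LinearMap.ker_eq_bot.mpr hg)
    exact ⟨f, .inr fun y => ⟨g y, LinearMap.congr_fun hf y⟩⟩

lemma exists_extend_ker_le_or_surjective {P : Submodule K V} (φ : P →ₗ[K] T) :
    ∃ χ : V →ₗ[K] T, χ ∘ₗ P.subtype = φ ∧ (LinearMap.ker χ ≤ P ∨ Function.Surjective χ) := by
  obtain ⟨C, hC⟩ := P.exists_isCompl
  obtain ⟨D, hD⟩ := (LinearMap.range φ).exists_isCompl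
  obtain ⟨f, hf⟩ := exists_injective_or_surjective (K := K) (V := C) (T := D)
  refine ⟨LinearMap.ofIsCompl hC φ (D.subtype ∘ₗ f), ?_,
    hf.imp (fun hinj v hv => ?_) fun hsurj => ?_⟩
  · ext; simp
  · obtain ⟨p, c, rfl, -⟩ := Submodule.existsUnique_add_of_isCompl hC v
    have hsum : φ p + f c = 0 := by simpa using hv
    have hfc : (f c : T) ∈ LinearMap.range φ :=
      ⟨-p, by rw [map_neg, neg_eq_of_add_eq_zero_right hsum]⟩
    have hfc0 : f c = 0 := by simpa using Submodule.disjoint_def.mp hD.disjoint _ hfc (f c).2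
    have hc : c = 0 := hinj (by simpa using hfc0)
    simp [hc]
  · rw [← LinearMap.range_eq_top, LinearMap.range_ofIsCompl, LinearMap.range_comp,
      LinearMap.range_eq_top.mpr hsurj, Submodule.map_subtype_top, hD.sup_eq_top]

lemma exists_eqOn_map_le_and_ker_inf_le_or_map_eq {U U' : Submodule K V} {W : Submodule K T}
    (ψ : V →ₗ[K] T) (hU : U' ≤ U) (hψ : U'.map ψ ≤ W) :
    ∃ χ : V →ₗ[K] T, (∀ v ∈ U', χ v = ψ v) ∧ U.map χ ≤ W ∧
      (LinearMap.ker χ ⊓ U ≤ U' ∨ U.map χ = W) := by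
  have hP (v : U'.submoduleOf U) : ψ v ∈ W := hψ ⟨v, v.2, rfl⟩
  obtain ⟨χ₀, hχ₀, hmax⟩ := exists_extend_ker_le_or_surjective
    ((ψ ∘ₗ U.subtype ∘ₗ (U'.submoduleOf U).subtype).codRestrict W hP)
  obtain ⟨χ, hχ⟩ := (W.subtype ∘ₗ χ₀).exists_extend
  have hχ_apply (v : U) : χ v = χ₀ v := LinearMap.congr_fun hχ v
  have hmap : U.map χ = (LinearMap.range χ₀).map W.subtype := by
    rw [← LinearMap.range_comp, ← hχ, LinearMap.range_comp, Submodule.range_subtype]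
  refine ⟨χ, fun v hv => ?_, hmap.trans_le (Submodule.map_subtype_le _ _), ?_⟩
  · rw [hχ_apply ⟨v, hU hv⟩]
    exact congrArg Subtype.val (LinearMap.congr_fun hχ₀ ⟨⟨v, hU hv⟩, hv⟩)
  · refine hmax.imp (fun hker v hv => ?_) fun hsurj => ?_
    · exact hker (x := ⟨v, hv.2⟩) (Subtype.ext ((hχ_apply _).symm.trans hv.1))
    · rw [hmap, LinearMap.range_eq_top.mpr hsurj, Submodule.map_subtype_top]

theorem exists_filtered_map_finrank_ker_add_le {U : ℕ → Submodule K V} {W : ℕ → Submodule K T}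
    (hU : Antitone U) (hW : Antitone W) {L : ℕ} (hWL : W L = ⊥) :
    ∃ ψ : V →ₗ[K] T, (∀ m, (U m).map ψ ≤ W m) ∧
      ∃ m ≤ L, finrank K (LinearMap.ker ψ ⊓ U 0 : Submodule K V) + finrank K (W m) ≤
        finrank K (U m) := by
  -- The witness `m` is the last step, going up from `U L`, at which the extension is onto `W m`.
  induction L generalizing U W with
  | zero =>
    refine ⟨0, by simp, 0, le_rfl, ?_⟩
    rw [hWL, finrank_bot, add_zero]
    exact Submodule.finrank_mono inf_le_right
  | succ L ih =>
    obtain ⟨ψ, hψ, m, hm, hdim⟩ := ih (U := fun l => U (l + 1)) (W := fun l => W (l + 1))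
      (fun _ _ h => hU (Nat.succ_le_succ h)) (fun _ _ h => hW (Nat.succ_le_succ h)) hWL
    obtain ⟨χ, hχψ, hχ, hmax⟩ := exists_eqOn_map_le_and_ker_inf_le_or_map_eq ψ
      (hU zero_le_one) ((hψ 0).trans (hW zero_le_one))
    refine ⟨χ, fun l => ?_, ?_⟩
    · cases l with
      | zero => exact hχ
      | succ l =>
        rintro _ ⟨v, hv, rfl⟩
        rw [hχψ v (hU (Nat.le_add_left 1 l) hv)]
        exact hψ l ⟨v, hv, rfl⟩
    · rcases hmax with hker | hsurj
      · refine ⟨m + 1, Nat.succ_le_succ hm, (Nat.add_le_add_right ?_ _).trans hdim⟩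
        refine Submodule.finrank_mono fun v hv => ⟨?_, hker hv⟩
        exact (hχψ v (hker hv)).symm.trans hv.1
      · refine ⟨0, Nat.zero_le _, ?_⟩
        rw [← finrank_map_add_finrank_ker_inf χ (U 0), hsurj, add_comm]

end FilteredMaps

lemma finrank_submodule_pi {K ι : Type*} [Field K] [Fintype ι] {V : ι → Type*}
    [∀ a, AddCommGroup (V a)] [∀ a, Module K (V a)] [∀ a, FiniteDimensional K (V a)]
    (N : ∀ a, Submodule K (V a)) :
    Module.finrank K (Submodule.pi Set.univ N) = ∑ a, Module.finrank K (N a) := by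
  rw [← Module.finrank_pi_fintype K]
  refine LinearEquiv.finrank_eq
    { toFun := fun τ a => ⟨τ.1 a, τ.2 a trivial⟩
      invFun := fun τ => ⟨fun a => τ a, fun a _ => (τ a).2⟩
      map_add' := fun _ _ => rfl
      map_smul' := fun _ _ => rfl }

namespace QuiverData

open Filter Module

variable {Q : QuiverData} {d : Fin Q.n → ℕ} {K : Type} [Field K]

lemma proj_apply (i : Fin Q.n) (m : Carrier Q d K) (c : Σ j, Fin (d j)) :
    proj Q d K i m c = if c.1 = i then m c else 0 := rfl

lemma proj_proj_self (i : Fin Q.n) (m : Carrier Q d K) :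
    proj Q d K i (proj Q d K i m) = proj Q d K i m := by
  ext c
  rw [proj_apply, proj_apply]
  split_ifs <;> rfl

lemma proj_eq_sum_single (i : Fin Q.n) (m : Carrier Q d K) :
    proj Q d K i m = ∑ w, m ⟨i, w⟩ • Pi.single (⟨i, w⟩ : Σ j, Fin (d j)) (1 : K) := by
  ext ⟨j, v⟩
  rw [proj_apply, Finset.sum_apply]
  split_ifs with h
  · obtain rfl : j = i := h
    rw [Finset.sum_eq_single v] <;> simp +contextual [eq_comm]
  · exact (Finset.sum_eq_zero fun w _ => by simp [h]).symm

lemma proj_arrowMap (x : RepSpace Q d K) (a : Fin Q.numArrows) (i : Fin Q.n)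
    (m : Carrier Q d K) :
    proj Q d K i (arrowMap Q d K x a m) = if Q.tgt a = i then arrowMap Q d K x a m else 0 := by
  ext c
  rw [proj_apply]
  by_cases hc : c.1 = Q.tgt a
  · rw [hc]; split_ifs <;> rfl
  · split_ifs <;> simp [arrowMap, hc]

lemma arrowMap_proj (x : RepSpace Q d K) (a : Fin Q.numArrows) (i : Fin Q.n)
    (m : Carrier Q d K) :
    arrowMap Q d K x a (proj Q d K i m) = if Q.src a = i then arrowMap Q d K x a m else 0 := by
  ext c
  by_cases h : Q.src a = i <;> by_cases hc : c.1 = Q.tgt a <;>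
    simp [arrowMap, proj_apply, h, hc]

lemma arrowMap_add_smul (x z : RepSpace Q d K) (t : K) (a : Fin Q.numArrows) :
    arrowMap Q d K (x + t • z) a = arrowMap Q d K x a + t • arrowMap Q d K z a := by
  ext m c
  by_cases hc : c.1 = Q.tgt a <;>
    simp [arrowMap, hc, add_mul, Finset.sum_add_distrib, Finset.mul_sum, mul_assoc]

lemma exists_arrowMap_eq (f : Fin Q.numArrows → End K (Carrier Q d K)) :
    ∃ x : RepSpace Q d K, ∀ a m,
      arrowMap Q d K x a m = proj Q d K (Q.tgt a) (f a (proj Q d K (Q.src a) m)) := by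
  refine ⟨fun c => f c.1 (Pi.single ⟨Q.src c.1, c.2.2⟩ 1) ⟨Q.tgt c.1, c.2.1⟩, fun a m => ?_⟩
  ext ⟨j, v⟩
  rw [proj_apply]
  split_ifs with h
  · obtain rfl : j = Q.tgt a := h
    simp [arrowMap, proj_eq_sum_single, mul_comm]
  · simp [arrowMap, h]

lemma radPow_zero (x : RepSpace Q d K) : radPow Q d K x 0 = ⊤ :=
  top_le_iff.mp <| le_iSup_of_le ⟨[], rfl⟩ fun v _ => ⟨v, by simp [wordMap]⟩

lemma radPow_succ (x : RepSpace Q d K) (l : ℕ) :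
    radPow Q d K x (l + 1) = ⨆ a, (radPow Q d K x l).map (arrowMap Q d K x a) := by
  have range_cons (a : Fin Q.numArrows) (w : List (Fin Q.numArrows)) :
      LinearMap.range (wordMap Q d K x (a :: w)) =
        (LinearMap.range (wordMap Q d K x w)).map (arrowMap Q d K x a) := by
    rw [← LinearMap.range_comp]
    simp only [wordMap, List.map_cons, List.prod_cons]
    rfl
  apply le_antisymm
  · refine iSup_le fun ⟨w, hw⟩ => ?_
    obtain ⟨a, w, rfl⟩ := List.exists_cons_of_length_eq_add_one hw
    rw [range_cons]
    exact le_iSup_of_le a (Submodule.map_mono (le_iSup_of_le ⟨w, by simpa using hw⟩ le_rfl))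
  · refine iSup_le fun a => ?_
    rw [radPow, Submodule.map_iSup]
    refine iSup_le fun ⟨w, hw⟩ => ?_
    rw [← range_cons]
    exact le_iSup_of_le ⟨a :: w, by simp [hw]⟩ le_rfl

lemma map_arrowMap_radPow_le (x : RepSpace Q d K) (l : ℕ) (a : Fin Q.numArrows) :
    (radPow Q d K x l).map (arrowMap Q d K x a) ≤ radPow Q d K x (l + 1) := by
  rw [radPow_succ]
  exact le_iSup (fun a => (radPow Q d K x l).map (arrowMap Q d K x a)) a

lemma radPow_antitone (x : RepSpace Q d K) : Antitone (radPow Q d K x) := by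
  refine antitone_nat_of_succ_le fun l => ?_
  induction l with
  | zero => rw [radPow_zero]; exact le_top
  | succ l ih =>
    rw [radPow_succ x (l + 1)]
    refine le_trans ?_ (radPow_succ x l).ge
    exact iSup_mono fun a => Submodule.map_mono ih

lemma mem_truncRepVar_iff {L : ℕ} {x : RepSpace Q d K} :
    x ∈ TruncRepVar Q d K L ↔ radPow Q d K x (L + 1) = ⊥ := by
  simp only [TruncRepVar, radPow, iSup_eq_bot, LinearMap.range_eq_bot, Subtype.forall,
    Set.mem_ofPred_eq]

/-- The space `e_i J^l M_x`, where `e_i` is the primitive idempotent of the vertex `i`. -/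
noncomputable def radAt (x : RepSpace Q d K) (i : Fin Q.n) (l : ℕ) :
    Submodule K (Carrier Q d K) :=
  (radPow Q d K x l).map (proj Q d K i)

lemma radAt_zero (x : RepSpace Q d K) (i : Fin Q.n) :
    radAt x i 0 = LinearMap.range (proj Q d K i) := by
  rw [radAt, radPow_zero, LinearMap.range_eq_map]

lemma radAt_antitone (x : RepSpace Q d K) (i : Fin Q.n) : Antitone (radAt x i) :=
  fun _ _ h => Submodule.map_mono (radPow_antitone x h)

lemma radAt_le_radPow (x : RepSpace Q d K) (i : Fin Q.n) (l : ℕ) :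
    radAt x i l ≤ radPow Q d K x l := by
  cases l with
  | zero => rw [radPow_zero]; exact le_top
  | succ l =>
    rw [radAt, radPow_succ, Submodule.map_iSup]
    refine iSup_mono fun a => ?_
    rintro _ ⟨_, ⟨v, hv, rfl⟩, rfl⟩
    rw [proj_arrowMap]
    split_ifs
    · exact ⟨v, hv, rfl⟩
    · exact zero_mem _

/-- The space `⊕_a e_{tgt a} J^l M_x`, where `a` runs over the arrows starting at `i`. -/
noncomputable def outRad (x : RepSpace Q d K) (i : Fin Q.n) (l : ℕ) :
    Submodule K ({a // Q.src a = i} → Carrier Q d K) :=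
  Submodule.pi Set.univ fun a => radAt x (Q.tgt a) l

lemma mem_outRad_iff {x : RepSpace Q d K} {i : Fin Q.n} {l : ℕ}
    {τ : {a // Q.src a = i} → Carrier Q d K} :
    τ ∈ outRad x i l ↔ ∀ a, τ a ∈ radAt x (Q.tgt a.1) l := by
  simp [outRad]

lemma outRad_antitone (x : RepSpace Q d K) (i : Fin Q.n) : Antitone (outRad x i) :=
  fun _ _ h => Submodule.pi_mono fun a _ => radAt_antitone x (Q.tgt a) h

lemma finrank_outRad (x : RepSpace Q d K) (i : Fin Q.n) (l : ℕ) :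
    (finrank K (outRad x i l) : ℤ) =
      outflowZ Q (fun j => (vdim Q d K (radPow Q d K x l) j : ℤ)) i := by
  rw [outRad, finrank_submodule_pi, Nat.cast_sum, outflowZ]
  exact (Finset.sum_subtype _ (by simp) fun a =>
    (vdim Q d K (radPow Q d K x l) (Q.tgt a) : ℤ)).symm

/-- The action on `M_x` of all arrows starting at `i` simultaneously; on `e_i M_x` its kernel is
the socle at `i`. -/
noncomputable def outMap (x : RepSpace Q d K) (i : Fin Q.n) :
    Carrier Q d K →ₗ[K] {a // Q.src a = i} → Carrier Q d K :=
  LinearMap.pi fun a => arrowMap Q d K x a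

lemma outMap_apply (x : RepSpace Q d K) (i : Fin Q.n) (m : Carrier Q d K)
    (a : {a // Q.src a = i}) : outMap x i m a = arrowMap Q d K x a m := rfl

lemma outMap_proj (x : RepSpace Q d K) (i : Fin Q.n) (m : Carrier Q d K) :
    outMap x i (proj Q d K i m) = outMap x i m := by
  ext1 a
  rw [outMap_apply, arrowMap_proj, if_pos a.2, outMap_apply]

lemma outMap_add_smul (x z : RepSpace Q d K) (t : K) (i : Fin Q.n) :
    outMap (x + t • z) i = outMap x i + t • outMap z i := by
  refine LinearMap.ext fun m => funext fun a => ?_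
  simp [outMap_apply, arrowMap_add_smul]

lemma map_outMap_radAt_le (x : RepSpace Q d K) (i : Fin Q.n) (l : ℕ) :
    (radAt x i l).map (outMap x i) ≤ outRad x i (l + 1) := by
  rintro _ ⟨_, ⟨v, hv, rfl⟩, rfl⟩
  refine mem_outRad_iff.mpr fun a => ⟨arrowMap Q d K x a.1 v, ?_, ?_⟩
  · exact map_arrowMap_radPow_le x l a.1 ⟨v, hv, rfl⟩
  · rw [proj_arrowMap, if_pos rfl, outMap_proj, outMap_apply]

lemma map_proj_socPow_zero (x : RepSpace Q d K) (i : Fin Q.n) :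
    (socPow Q d K x 0).map (proj Q d K i) =
      LinearMap.ker (outMap x i) ⊓ LinearMap.range (proj Q d K i) := by
  have mem_soc {v} : v ∈ socPow Q d K x 0 ↔ ∀ a, arrowMap Q d K x a v = 0 := by simp [socPow]
  ext v
  constructor
  · rintro ⟨u, hu, rfl⟩
    refine ⟨?_, u, rfl⟩
    rw [SetLike.mem_coe, LinearMap.mem_ker, outMap_proj]
    exact funext fun a => mem_soc.mp hu a
  · rintro ⟨hv, u, rfl⟩
    refine ⟨proj Q d K i u, mem_soc.mpr fun a => ?_, proj_proj_self i u⟩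
    by_cases ha : Q.src a = i
    · exact congrFun hv ⟨a, ha⟩
    · rw [arrowMap_proj, if_neg ha]

lemma vdim_socPow_zero (x : RepSpace Q d K) (i : Fin Q.n) :
    vdim Q d K (socPow Q d K x 0) i =
      finrank K (LinearMap.ker (outMap x i) ⊓ LinearMap.range (proj Q d K i) : Submodule _ _) := by
  rw [vdim, map_proj_socPow_zero]

/-- The number `dim e_i J^m M_x - ∑_a dim e_{tgt a} J^{m+1} M_x`, where `a` runs over the arrows
starting at `i`: the `i`-th entry of `∑_{l ≥ m} (dim S_l - (dim S_{l+1}) B)` for `S = S(M_x)`. -/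
noncomputable def radExcess (x : RepSpace Q d K) (i : Fin Q.n) (m : ℕ) : ℤ :=
  vdim Q d K (radPow Q d K x m) i -
    outflowZ Q (fun j => (vdim Q d K (radPow Q d K x (m + 1)) j : ℤ)) i

lemma radExcess_eq_finrank_sub (x : RepSpace Q d K) (i : Fin Q.n) (m : ℕ) :
    radExcess x i m = (finrank K (radAt x i m) : ℤ) - finrank K (outRad x i (m + 1)) := by
  rw [finrank_outRad]
  rfl

lemma radExcess_le_vdim_socPow_zero (x : RepSpace Q d K) (i : Fin Q.n) (m : ℕ) :
    radExcess x i m ≤ vdim Q d K (socPow Q d K x 0) i := by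
  have hrank := finrank_map_add_finrank_ker_inf (outMap x i) (radAt x i m)
  have hrange := Submodule.finrank_mono (map_outMap_radAt_le x i m)
  have hker : finrank K (LinearMap.ker (outMap x i) ⊓ radAt x i m : Submodule _ _) ≤
      vdim Q d K (socPow Q d K x 0) i := by
    rw [vdim_socPow_zero, ← radAt_zero x]
    exact Submodule.finrank_mono (inf_le_inf_left _ (radAt_antitone x i m.zero_le))
  rw [radExcess_eq_finrank_sub]
  omega

lemma exists_outMap_eq {i : Fin Q.n}
    (ψ : Carrier Q d K →ₗ[K] {a // Q.src a = i} → Carrier Q d K)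
    (hψ : ∀ m a, proj Q d K (Q.tgt a.1) (ψ (proj Q d K i m) a) = ψ (proj Q d K i m) a) :
    ∃ z : RepSpace Q d K, (∀ m, outMap z i m = ψ (proj Q d K i m)) ∧
      ∀ a, Q.src a ≠ i → arrowMap Q d K z a = 0 := by
  obtain ⟨z, hz⟩ := exists_arrowMap_eq (K := K) (d := d) fun a =>
    if h : Q.src a = i then LinearMap.proj ⟨a, h⟩ ∘ₗ ψ else 0
  refine ⟨z, fun m => ?_, fun a ha => ?_⟩
  · ext1 ⟨a, ha⟩
    subst ha
    rw [outMap_apply, hz, dif_pos rfl, ← hψ]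
    rfl
  · refine LinearMap.ext fun m => ?_
    rw [hz, dif_neg ha, LinearMap.zero_apply, map_zero, LinearMap.zero_apply]

lemma exists_map_radPow_le_and_vdim_socPow_zero_le {L : ℕ} {x : RepSpace Q d K}
    (hx : x ∈ TruncRepVar Q d K L) (i : Fin Q.n) :
    ∃ z : RepSpace Q d K,
      (∀ l a, (radPow Q d K x l).map (arrowMap Q d K z a) ≤ radPow Q d K x (l + 1)) ∧
        ∃ m ≤ L, (vdim Q d K (socPow Q d K z 0) i : ℤ) ≤ radExcess x i m := by
  have houtRad : outRad x i (L + 1) = ⊥ := by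
    simp [outRad, radAt, mem_truncRepVar_iff.mp hx]
  obtain ⟨ψ, hψ, m, hm, hdim⟩ := exists_filtered_map_finrank_ker_add_le (radAt_antitone x i)
    (W := fun l => outRad x i (l + 1)) (fun _ _ h => outRad_antitone x i (by gcongr)) houtRad
  have hψ_mem {l v} (hv : v ∈ radPow Q d K x l) (a) :
      ψ (proj Q d K i v) a ∈ radAt x (Q.tgt a.1) (l + 1) :=
    mem_outRad_iff.mp (hψ l ⟨_, ⟨v, hv, rfl⟩, rfl⟩) a
  have hψ_proj (v a) : proj Q d K (Q.tgt a.1) (ψ (proj Q d K i v) a) = ψ (proj Q d K i v) a := by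
    obtain ⟨u, -, hu⟩ := hψ_mem (l := 0) (v := v) (by simp [radPow_zero]) a
    rw [← hu, proj_proj_self]
  obtain ⟨z, hzψ, hz⟩ := exists_outMap_eq ψ hψ_proj
  refine ⟨z, ?_, m, hm, ?_⟩
  · rintro l a _ ⟨v, hv, rfl⟩
    by_cases ha : Q.src a = i
    · have hzv : arrowMap Q d K z a v = ψ (proj Q d K i v) ⟨a, ha⟩ := congrFun (hzψ v) ⟨a, ha⟩
      exact hzv ▸ radAt_le_radPow _ _ _ (hψ_mem hv ⟨a, ha⟩)
    · rw [hz a ha]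
      exact zero_mem _
  · have hker : vdim Q d K (socPow Q d K z 0) i ≤
        finrank K (LinearMap.ker ψ ⊓ radAt x i 0 : Submodule _ _) := by
      rw [vdim_socPow_zero, radAt_zero]
      refine Submodule.finrank_mono ?_
      rintro _ ⟨hv, u, rfl⟩
      exact ⟨by rwa [SetLike.mem_coe, LinearMap.mem_ker, outMap_proj, hzψ] at hv, u, rfl⟩
    rw [radExcess_eq_finrank_sub]
    omega

lemma eventually_radPow_add_smul_eq {x z : RepSpace Q d K}
    (hz : ∀ l a, (radPow Q d K x l).map (arrowMap Q d K z a) ≤ radPow Q d K x (l + 1)) (l : ℕ) :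
    ∀ᶠ t : K in cofinite, radPow Q d K (x + t • z) l = radPow Q d K x l := by
  induction l with
  | zero => exact .of_forall fun t => by rw [radPow_zero, radPow_zero]
  | succ l ih =>
    filter_upwards [ih, eventually_cofinite_iSup_map_add_smul_eq (radPow_succ x l).symm (hz l)]
      with t hl hspan
    simpa only [radPow_succ (x + t • z), hl, arrowMap_add_smul] using hspan

lemma eventually_vdim_socPow_zero_add_smul_le (x z : RepSpace Q d K) (i : Fin Q.n) :
    ∀ᶠ t : K in cofinite,
      vdim Q d K (socPow Q d K (x + t • z) 0) i ≤ vdim Q d K (socPow Q d K z 0) i := by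
  let U := LinearMap.range (proj Q d K i)
  filter_upwards [eventually_cofinite_finrank_range_right_le ((outMap x i).domRestrict U)
    ((outMap z i).domRestrict U)] with t ht
  have hpencil : (outMap x i).domRestrict U + t • (outMap z i).domRestrict U =
      (outMap (x + t • z) i).domRestrict U := by
    rw [outMap_add_smul]
    rfl
  rw [hpencil, LinearMap.range_domRestrict, LinearMap.range_domRestrict] at ht
  have hz := finrank_map_add_finrank_ker_inf (outMap z i) U
  have hxz := finrank_map_add_finrank_ker_inf (outMap (x + t • z) i) U
  rw [vdim_socPow_zero, vdim_socPow_zero]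
  change finrank K (LinearMap.ker (outMap (x + t • z) i) ⊓ U : Submodule _ _) ≤
    finrank K (LinearMap.ker (outMap z i) ⊓ U : Submodule _ _)
  omega

theorem exists_radLayering_eq_and_vdim_socPow_zero_le [Infinite K] {L : ℕ} {x : RepSpace Q d K}
    (hx : x ∈ TruncRepVar Q d K L) (i : Fin Q.n) :
    ∃ y ∈ TruncRepVar Q d K L, radLayering Q d K L y = radLayering Q d K L x ∧
      ∃ m ≤ L, (vdim Q d K (socPow Q d K y 0) i : ℤ) ≤ radExcess x i m := by
  obtain ⟨z, hz, m, hm, hzm⟩ := exists_map_radPow_le_and_vdim_socPow_zero_le hx i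
  obtain ⟨t, hrad, hsoc⟩ : ∃ t : K,
      (∀ l ∈ Finset.range (L + 2), radPow Q d K (x + t • z) l = radPow Q d K x l) ∧
        vdim Q d K (socPow Q d K (x + t • z) 0) i ≤ vdim Q d K (socPow Q d K z 0) i :=
    (((Finset.eventually_all _).mpr fun l _ => eventually_radPow_add_smul_eq hz l).and
      (eventually_vdim_socPow_zero_add_smul_le x z i)).exists
  replace hrad {l} (hl : l ≤ L + 1) : radPow Q d K (x + t • z) l = radPow Q d K x l :=
    hrad l (Finset.mem_range.mpr (by omega))
  refine ⟨x + t • z, ?_, ?_, m, hm, (Nat.cast_le.mpr hsoc).trans hzm⟩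
  · rwa [mem_truncRepVar_iff, hrad le_rfl, ← mem_truncRepVar_iff]
  · ext l j
    rw [radLayering, radLayering, hrad (by omega), hrad (by omega)]

lemma vdim_radPow_eq_zero {L l : ℕ} {x : RepSpace Q d K} (hx : x ∈ TruncRepVar Q d K L)
    (hl : L < l) (i : Fin Q.n) : vdim Q d K (radPow Q d K x l) i = 0 := by
  have hbot : radPow Q d K x l = ⊥ :=
    le_bot_iff.mp ((radPow_antitone x hl).trans_eq (mem_truncRepVar_iff.mp hx))
  rw [vdim, hbot, Submodule.map_bot, finrank_bot]

lemma seqZ_radLayering {L : ℕ} {x : RepSpace Q d K} (hx : x ∈ TruncRepVar Q d K L) (l : ℕ)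
    (i : Fin Q.n) :
    seqZ Q L (radLayering Q d K L x) l i =
      vdim Q d K (radPow Q d K x l) i - vdim Q d K (radPow Q d K x (l + 1)) i := by
  rw [seqZ]
  split_ifs with hl
  · exact Nat.cast_sub (Submodule.finrank_mono (radAt_antitone x i l.le_succ))
  · rw [vdim_radPow_eq_zero hx (by omega), vdim_radPow_eq_zero hx (by omega), sub_self]

lemma sum_Icc_seqZ_sub_outflowZ {L m : ℕ} {x : RepSpace Q d K} (hx : x ∈ TruncRepVar Q d K L)
    (hm : m ≤ L) (i : Fin Q.n) :
    ∑ l ∈ Finset.Icc m L, (seqZ Q L (radLayering Q d K L x) l i -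
      outflowZ Q (seqZ Q L (radLayering Q d K L x) (l + 1)) i) = radExcess x i m := by
  have hterm (l : ℕ) : seqZ Q L (radLayering Q d K L x) l i -
      outflowZ Q (seqZ Q L (radLayering Q d K L x) (l + 1)) i =
        radExcess x i l - radExcess x i (l + 1) := by
    simp only [radExcess, outflowZ, seqZ_radLayering hx, Finset.sum_sub_distrib]
    ring
  have hlast : radExcess x i (L + 1) = 0 := by
    simp [radExcess, outflowZ, vdim_radPow_eq_zero hx]
  simp only [hterm]
  rw [← Finset.Ico_add_one_right_eq_Icc, Finset.sum_Ico_eq_sub _ (by omega),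
    Finset.sum_range_sub', Finset.sum_range_sub', hlast]
  ring

lemma socLayering_zero (L : ℕ) (x : RepSpace Q d K) (i : Fin Q.n) :
    socLayering Q d K L x 0 i = vdim Q d K (socPow Q d K x 0) i := by
  simp [socLayering]

end QuiverData

lemma dominates.apply_zero_le {n L : ℕ} {S S' : Fin (L + 1) → Fin n → ℕ} (h : dominates S S')
    (i : Fin n) : S 0 i ≤ S' 0 i := by
  simpa [Finset.filter_eq'] using h 0 i

open QuiverData in
theorem statement_11_general (K : Type) [Field K] [Infinite K] (Q : QuiverData) (L : ℕ)
    (d : Fin Q.n → ℕ) (S : Fin (L + 1) → Fin Q.n → ℕ) (Sstar : Fin (L + 1) → Fin Q.n → ℕ)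
    (hgen : GenSoc Q d K L
      {x | x ∈ TruncRepVar Q d K L ∧ radLayering Q d K L x = S} Sstar) (i : Fin Q.n) :
    (Sstar 0 i : ℤ) =
      (Finset.range (L + 1)).sup' (Finset.nonempty_range_iff.mpr (Nat.succ_ne_zero L))
        (fun j => ∑ l ∈ Finset.Icc (L - j) L,
          (seqZ Q L S l i - outflowZ Q (seqZ Q L S (l + 1)) i)) := by
  obtain ⟨hmin, x, ⟨hx, rfl⟩, rfl⟩ := hgen
  simp only [sum_Icc_seqZ_sub_outflowZ hx (Nat.sub_le L _), socLayering_zero]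
  apply le_antisymm
  · obtain ⟨y, hy, hyx, m, hm, hym⟩ := exists_radLayering_eq_and_vdim_socPow_zero_le hx i
    have hxy : vdim Q d K (socPow Q d K x 0) i ≤ vdim Q d K (socPow Q d K y 0) i := by
      simpa only [socLayering_zero] using (hmin y ⟨hy, hyx⟩).apply_zero_le i
    refine ((Nat.cast_le.mpr hxy).trans hym).trans ?_
    rw [← Nat.sub_sub_self hm]
    exact Finset.le_sup' (fun j => radExcess x i (L - j)) (Finset.mem_range.mpr (by omega))
  · exact Finset.sup'_le _ _ fun j _ => radExcess_le_vdim_socPow_zero x i (L - j)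

open QuiverData in
/-- For a truncated path algebra and a realizable semisimple sequence
`S` with generic socle layering `S*`, the generic socle `S*_0` has dimension vector
`dim S*_0 = sup { ∑_{l=L−j}^{L} (dim S_l − (dim S_{l+1})·B) : 0 ≤ j ≤ L }` (componentwise,
`B` the transpose of the adjacency matrix, `S_{L+1} = 0`). -/
theorem statement_11 (K : Type) [Field K] [IsAlgClosed K]
    (Q : QuiverData) (L : ℕ) (hL : 0 < L)
    (d : Fin Q.n → ℕ) (S : Fin (L+1) → Fin Q.n → ℕ) (hS : hasDimVec S d)
    (Sstar : Fin (L+1) → Fin Q.n → ℕ)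
    (hgen : GenSoc Q d K L
      {x | x ∈ TruncRepVar Q d K L ∧ radLayering Q d K L x = S} Sstar) :
    ∀ i : Fin Q.n, (Sstar 0 i : ℤ) =
      (Finset.range (L+1)).sup'
        (Finset.nonempty_range_iff.mpr (Nat.succ_ne_zero L))
        (fun j => ∑ l ∈ Finset.Icc (L - j) L,
          (seqZ Q L S l i - outflowZ Q (seqZ Q L S (l+1)) i)) := by
  exact statement_11_general K Q L d S Sstar hgen
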